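/- arXiv:1901.01150 — 2 statements merged into one kernel-verified Lean document; each statement's English description precedes it below -/
import Mathlib

section
/- Let f : ℝⁿ → [0,∞] be radial, f(x) = f₀(|x|), and let 0 < α < n. Then the Riesz potential (I_n^α f)(x) is radial, equal for |x| = r to 2^{−α} r^{2−n} (I^{α/2}_{+,2} s^{n−α−2} I^{α/2}_{−,2} f₀)(r), where I^{α/2}_{±,2} are the Erdélyi–Kober fractional integrals. -/
open MeasureTheory Set ENNReal

/-- The Erdélyi–Kober fractional integral of the first kind. -/
noncomputable def EKplus (β : ℝ) (g : ℝ → ℝ≥0∞) (t : ℝ) : ℝ≥0∞ :=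
  ENNReal.ofReal (2 / Real.Gamma β) *
    ∫⁻ r in Ioo (0:ℝ) t, ENNReal.ofReal ((t ^ 2 - r ^ 2) ^ (β - 1) * r) * g r

/-- The Erdélyi–Kober fractional integral of the second kind. -/
noncomputable def EKminus (β : ℝ) (g : ℝ → ℝ≥0∞) (t : ℝ) : ℝ≥0∞ :=
  ENNReal.ofReal (2 / Real.Gamma β) *
    ∫⁻ r in Ioi t, ENNReal.ofReal ((r ^ 2 - t ^ 2) ^ (β - 1) * r) * g r

lemma lint_of_int {X : Type*} [MeasurableSpace X] {μ : Measure X} {f : X → ℝ} {c : ℝ}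
    (hf : 0 ≤ᵐ[μ] f) (h : ∫ x, f x ∂μ = c) (hc : c ≠ 0) :
    ∫⁻ x, ENNReal.ofReal (f x) ∂μ = ENNReal.ofReal c := by
  rw [← h, ofReal_integral_eq_lintegral_ofReal _ hf]
  exact Integrable.of_integral_ne_zero (by rw [h]; exact hc)

lemma lint_gamma {b q : ℝ} (hb : 0 < b) (hq : 0 < q) :
    ∫⁻ t in Ioi (0:ℝ), ENNReal.ofReal (t ^ (b - 1) * Real.exp (-(q * t))) =
      ENNReal.ofReal ((1 / q) ^ b * Real.Gamma b) := by
  refine lint_of_int ?_ (Real.integral_rpow_mul_exp_neg_mul_Ioi hb hq) ?_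
  · filter_upwards [self_mem_ae_restrict measurableSet_Ioi] with t ht
    have : (0:ℝ) < t := ht
    simp only [Pi.zero_apply]
    positivity
  · have := Real.Gamma_pos_of_pos hb
    positivity

lemma lint_gauss (n : ℕ) {b : ℝ} (hb : 0 < b) :
    ∫⁻ v : EuclideanSpace ℝ (Fin n), ENNReal.ofReal (Real.exp (-b * ‖v‖ ^ 2)) =
      ENNReal.ofReal ((Real.pi / b) ^ ((n:ℝ) / 2)) := by
  refine lint_of_int ?_ ?_ (c := (Real.pi / b) ^ ((n:ℝ) / 2)) ?_
  · filter_upwards with t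
    simp only [Pi.zero_apply]
    positivity
  · rw [GaussianFourier.integral_rexp_neg_mul_sq_norm hb]
    simp
  · have := Real.pi_pos
    positivity

lemma lint_gauss2 (n : ℕ) {p l : ℝ} (hp : 0 < p) (hl : 0 < l) (x : EuclideanSpace ℝ (Fin n)) :
    ∫⁻ y : EuclideanSpace ℝ (Fin n),
        ENNReal.ofReal (Real.exp (-p * ‖y‖ ^ 2) * Real.exp (-(‖x - y‖ ^ 2 * l))) =
      ENNReal.ofReal ((Real.pi / (p + l)) ^ ((n:ℝ) / 2) *
        Real.exp (-(‖x‖ ^ 2 * (p * l / (p + l))))) := by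
  have hpl : 0 < p + l := by positivity
  have key : ∀ y : EuclideanSpace ℝ (Fin n),
      ENNReal.ofReal (Real.exp (-p * ‖y‖ ^ 2) * Real.exp (-(‖x - y‖ ^ 2 * l))) =
      ENNReal.ofReal (Real.exp (-(p + l) * ‖y - (l / (p + l)) • x‖ ^ 2)) *
        ENNReal.ofReal (Real.exp (-(‖x‖ ^ 2 * (p * l / (p + l))))) := by
    intro y
    rw [← ENNReal.ofReal_mul (Real.exp_nonneg _), ← Real.exp_add, ← Real.exp_add]
    congr 2
    rw [norm_sub_sq_real, norm_sub_sq_real, inner_smul_right, norm_smul, mul_pow,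
      Real.norm_eq_abs, sq_abs, real_inner_comm]
    field_simp
    ring
  simp_rw [key]
  rw [lintegral_mul_const _ (by fun_prop),
    lintegral_sub_right_eq_self
      (fun y : EuclideanSpace ℝ (Fin n) => ENNReal.ofReal (Real.exp (-(p + l) * ‖y‖ ^ 2))),
    lint_gauss n hpl, ← ENNReal.ofReal_mul (by have := Real.pi_pos; positivity)]

lemma ekminus_gauss {b p s : ℝ} (hb : 0 < b) (hp : 0 < p) (hs : 0 < s) :
    EKminus b (fun t => ENNReal.ofReal (Real.exp (-p * t ^ 2))) s =
      ENNReal.ofReal (p ^ (-b) * Real.exp (-p * s ^ 2)) := by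
  have hG := Real.Gamma_pos_of_pos hb
  have himg : (fun t : ℝ => t ^ 2 - s ^ 2) '' Ioi s = Ioi 0 := by
    ext τ
    simp only [mem_image, mem_Ioi]
    constructor
    · rintro ⟨t, ht, rfl⟩
      nlinarith
    · intro hτ
      refine ⟨√(τ + s ^ 2), Real.lt_sqrt_of_sq_lt (by linarith), ?_⟩
      rw [Real.sq_sqrt (by positivity)]
      ring
  have hcv := lintegral_image_eq_lintegral_deriv_mul_of_monotoneOn (s := Ioi s)
    (f := fun t : ℝ => t ^ 2 - s ^ 2) (f' := fun t => 2 * t) measurableSet_Ioi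
    (fun t _ => by
      have := ((hasDerivAt_pow 2 t).sub_const (s ^ 2)).hasDerivWithinAt (s := Ioi s)
      simpa using this)
    (fun t ht u hu h => by
      have h1 : s < t := ht
      simp only
      nlinarith)
    (fun τ => ENNReal.ofReal (τ ^ (b - 1) * Real.exp (-(p * τ))))
  rw [himg, lint_gamma hb hp] at hcv
  unfold EKminus
  have h2 : ∀ t ∈ Ioi s, ENNReal.ofReal ((t ^ 2 - s ^ 2) ^ (b - 1) * t) *
      ENNReal.ofReal (Real.exp (-p * t ^ 2)) = ENNReal.ofReal (1 / 2 * Real.exp (-p * s ^ 2)) *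
      (ENNReal.ofReal (2 * t) * ENNReal.ofReal ((t ^ 2 - s ^ 2) ^ (b - 1) *
        Real.exp (-(p * (t ^ 2 - s ^ 2))))) := by
    intro t ht
    have h1 : s < t := ht
    have h3 : 0 < t := hs.trans h1
    have h4 : 0 < t ^ 2 - s ^ 2 := by nlinarith
    rw [← ENNReal.ofReal_mul (by positivity), ← ENNReal.ofReal_mul (by positivity),
      ← ENNReal.ofReal_mul (by positivity)]
    congr 1
    have : Real.exp (-p * t ^ 2) =
        Real.exp (-p * s ^ 2) * Real.exp (-(p * (t ^ 2 - s ^ 2))) := by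
      rw [← Real.exp_add]; congr 1; ring
    rw [this]; ring
  rw [setLIntegral_congr_fun measurableSet_Ioi h2,
    lintegral_const_mul' _ _ ENNReal.ofReal_ne_top, ← hcv,
    ← ENNReal.ofReal_mul (by positivity), ← ENNReal.ofReal_mul (by positivity)]
  congr 1
  rw [Real.rpow_neg hp.le, one_div, one_div, Real.inv_rpow hp.le]
  field_simp

/-- change of variables in the `λ` integral -/
lemma lint_subst {n a b p r : ℝ} (hb : n / 2 = a + b) (hp : 0 < p) (hr : 0 < r) :
    ∫⁻ l in Ioi (0:ℝ), ENNReal.ofReal (l ^ (a - 1) * ((p + l) ^ (-(n / 2)) *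
        Real.exp (-(r ^ 2 * (p * l / (p + l)))))) =
      ENNReal.ofReal (2 * p ^ (-b) * r ^ (2 - n)) *
      ∫⁻ s in Ioo (0:ℝ) r, ENNReal.ofReal ((r ^ 2 - s ^ 2) ^ (b - 1) * s ^ (2 * a - 1) *
        Real.exp (-p * s ^ 2)) := by
  have hpos : ∀ s ∈ Ioo (0:ℝ) r, 0 < r ^ 2 - s ^ 2 := by
    intro s hs
    have := hs.1; have := hs.2
    nlinarith
  have himg : (fun s : ℝ => p * s ^ 2 / (r ^ 2 - s ^ 2)) '' Ioo 0 r = Ioi 0 := by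
    ext l
    simp only [mem_image, mem_Ioi]
    constructor
    · rintro ⟨t, ht, rfl⟩
      have := hpos t ht; have := ht.1
      positivity
    · intro hl
      refine ⟨r * √(l / (p + l)), ⟨by positivity, ?_⟩, ?_⟩
      · have : √(l / (p + l)) < 1 := by
          rw [Real.sqrt_lt' one_pos, one_pow, div_lt_one (by positivity)]
          linarith
        nlinarith
      · have h1 : (p + l) ≠ 0 := by positivity
        rw [mul_pow, Real.sq_sqrt (by positivity)]
        have h2 : r ^ 2 - r ^ 2 * (l / (p + l)) = r ^ 2 * p / (p + l) := by
          field_simp; ring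
        rw [h2]
        field_simp
  have hcv := lintegral_image_eq_lintegral_deriv_mul_of_monotoneOn (s := Ioo 0 r)
    (f := fun s : ℝ => p * s ^ 2 / (r ^ 2 - s ^ 2))
    (f' := fun s => 2 * p * s * r ^ 2 / (r ^ 2 - s ^ 2) ^ 2) measurableSet_Ioo
    (fun t ht => by
      have h0 := (hpos t ht).ne'
      have := (((hasDerivAt_pow 2 t).const_mul p).div ((hasDerivAt_pow 2 t).const_sub (r ^ 2))
        h0).hasDerivWithinAt (s := Ioo 0 r)
      convert! this using 1
      field_simp
      push_cast
      ring)
    (fun t ht u hu h => by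
      have h1 := hpos t ht
      have h2 := hpos u hu
      have h3 := ht.1
      simp only
      have h4 : t ^ 2 ≤ u ^ 2 := by nlinarith
      gcongr)
    (fun l => ENNReal.ofReal (l ^ (a - 1) * ((p + l) ^ (-(n / 2)) *
        Real.exp (-(r ^ 2 * (p * l / (p + l)))))))
  rw [himg] at hcv
  rw [hcv, ← lintegral_const_mul' _ _ (by simp)]
  refine setLIntegral_congr_fun measurableSet_Ioo ?_
  intro s hs
  have h1 := hpos s hs
  have h2 := hs.1
  simp only
  rw [← ENNReal.ofReal_mul (by positivity), ← ENNReal.ofReal_mul (by positivity)]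
  congr 1
  set d := r ^ 2 - s ^ 2 with hd
  have e1 : p + p * s ^ 2 / d = p * r ^ 2 / d := by
    field_simp; rw [hd]; ring
  have e2 : r ^ 2 * (p * (p * s ^ 2 / d) / (p * r ^ 2 / d)) = p * s ^ 2 := by
    field_simp
  have hs2 : (s ^ 2) ^ (a - 1) = s ^ (2 * a - 2) := by
    rw [← Real.rpow_natCast, ← Real.rpow_mul h2.le]; congr 1; push_cast; ring
  have hr2 : (r ^ 2) ^ (-(n / 2)) = r ^ (-n) := by
    rw [← Real.rpow_natCast, ← Real.rpow_mul hr.le]; congr 1; push_cast; ring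
  rw [e1, e2, Real.div_rpow (by positivity) h1.le, Real.div_rpow (by positivity) h1.le,
    Real.mul_rpow hp.le (by positivity), Real.mul_rpow hp.le (by positivity), hs2, hr2, neg_mul]
  have f1 : p ^ (-b) = p ^ (a - 1) * p ^ (-(n / 2)) * p := by
    nth_rw 4 [← Real.rpow_one p]
    rw [← Real.rpow_add hp, ← Real.rpow_add hp]; congr 1; linarith
  have f2 : r ^ (2 - n) = r ^ (-n) * r ^ 2 := by
    rw [← Real.rpow_natCast r 2, ← Real.rpow_add hr]; congr 1; push_cast; ring
  have f3 : s ^ (2 * a - 1) = s ^ (2 * a - 2) * s := by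
    nth_rw 3 [← Real.rpow_one s]
    rw [← Real.rpow_add h2]; congr 1; ring
  have f4 : d ^ (b - 1) = (d ^ (a - 1))⁻¹ * (d ^ (-(n / 2)))⁻¹ * (d ^ 2)⁻¹ := by
    rw [← Real.rpow_natCast d 2, ← Real.rpow_neg h1.le, ← Real.rpow_neg h1.le,
      ← Real.rpow_neg h1.le, ← Real.rpow_add h1, ← Real.rpow_add h1]
    congr 1; push_cast; linarith
  rw [f1, f2, f3, f4]
  field_simp

lemma lint_fin {n a b r : ℝ} (hn : n / 2 = a + b) (ha : 0 < a) (hb : 0 < b) :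
    ∫⁻ l in Ioi (0:ℝ), ENNReal.ofReal (l ^ (a - 1) * ((1 + l) ^ (-(n / 2)) *
        Real.exp (-(r ^ 2 * (1 * l / (1 + l)))))) ≠ ∞ := by
  have hb1 : ∀ l : ℝ, 0 < l → Real.exp (-(r ^ 2 * (1 * l / (1 + l)))) ≤ 1 := by
    intro l hl
    rw [Real.exp_le_one_iff]
    have : 0 ≤ r ^ 2 * (1 * l / (1 + l)) := by positivity
    linarith
  have hn0 : -(n / 2) ≤ 0 := by linarith
  rw [← Ioc_union_Ioi_eq_Ioi (zero_le_one' ℝ),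
    lintegral_union measurableSet_Ioi (Set.Ioc_disjoint_Ioi le_rfl)]
  refine ENNReal.add_ne_top.2 ⟨?_, ?_⟩
  · have h1 : IntegrableOn (fun l : ℝ => l ^ (a - 1)) (Ioc 0 1) := by
      rw [← intervalIntegrable_iff_integrableOn_Ioc_of_le zero_le_one]
      exact intervalIntegral.intervalIntegrable_rpow' (by linarith)
    refine ne_top_of_le_ne_top h1.lintegral_lt_top.ne
      (setLIntegral_mono' measurableSet_Ioc ?_)
    intro l hl
    have hl0 := hl.1
    apply ENNReal.ofReal_le_ofReal
    have h2 : (1 + l) ^ (-(n / 2)) ≤ 1 := Real.rpow_le_one_of_one_le_of_nonpos (by linarith) hn0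
    have h3 := hb1 l hl0
    calc _ ≤ l ^ (a - 1) * (1 * 1) := by gcongr
      _ = _ := by ring
  · have h1 : IntegrableOn (fun l : ℝ => l ^ (-b - 1)) (Ioi 1) :=
      integrableOn_Ioi_rpow_of_lt (by linarith) one_pos
    refine ne_top_of_le_ne_top h1.lintegral_lt_top.ne
      (setLIntegral_mono' measurableSet_Ioi ?_)
    intro l hl
    have hl0 : 0 < l := one_pos.trans hl
    apply ENNReal.ofReal_le_ofReal
    have h2 : (1 + l) ^ (-(n / 2)) ≤ l ^ (-(n / 2)) :=
      Real.rpow_le_rpow_of_nonpos hl0 (by linarith) hn0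
    have h3 := hb1 l hl0
    calc _ ≤ l ^ (a - 1) * (l ^ (-(n / 2)) * 1) := by gcongr
      _ = _ := by rw [mul_one, ← Real.rpow_add hl0]; congr 1; linarith

lemma ext_moments {m m' : Measure ℝ} [IsFiniteMeasure m] [IsFiniteMeasure m']
    (hm : ∀ᵐ y ∂m, y ∈ Icc (0:ℝ) 1) (hm' : ∀ᵐ y ∂m', y ∈ Icc (0:ℝ) 1)
    (h : ∀ k : ℕ, ∫ y, y ^ k ∂m = ∫ y, y ^ k ∂m') : m = m' := by
  have hint : ∀ (q : Measure ℝ) [IsFiniteMeasure q] (_ : ∀ᵐ y ∂q, y ∈ Icc (0:ℝ) 1) (k : ℕ),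
      Integrable (fun y : ℝ => y ^ k) q := by
    intro q _ hq k
    refine Integrable.of_bound (by fun_prop) 1 ?_
    filter_upwards [hq] with y hy
    rw [norm_pow, Real.norm_eq_abs, abs_of_nonneg hy.1]
    exact pow_le_one₀ hy.1 hy.2
  have hpi : ∀ (q : Measure ℝ) [IsFiniteMeasure q] (_ : ∀ᵐ y ∂q, y ∈ Icc (0:ℝ) 1)
      (p : Polynomial ℝ), Integrable (fun y : ℝ => p.eval y) q := by
    intro q _ hq p
    simp_rw [Polynomial.eval_eq_sum_range]
    exact integrable_finsetSum _ fun i _ => (hint q hq i).const_mul _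
  have hpoly : ∀ p : Polynomial ℝ, ∫ y, p.eval y ∂m = ∫ y, p.eval y ∂m' := by
    intro p
    simp_rw [Polynomial.eval_eq_sum_range]
    rw [integral_finsetSum _ fun i _ => (hint m hm i).const_mul _,
      integral_finsetSum _ fun i _ => (hint m' hm' i).const_mul _]
    simp_rw [integral_const_mul, h]
  have hclose : ∀ (q : Measure ℝ) [IsFiniteMeasure q] (_ : ∀ᵐ y ∂q, y ∈ Icc (0:ℝ) 1)
      (p : Polynomial ℝ) (f : BoundedContinuousFunction ℝ ℝ) (ε : ℝ)
      (_ : ∀ x ∈ Icc (0:ℝ) 1, |p.eval x - f x| < ε),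
      |∫ y, p.eval y ∂q - ∫ y, f y ∂q| ≤ ε * q.real univ := by
    intro q _ hq p f ε hp
    rw [← integral_sub (hpi q hq p) (f.integrable q), ← Real.norm_eq_abs]
    refine norm_integral_le_of_norm_le_const ?_
    filter_upwards [hq] with y hy
    exact (hp y hy).le
  apply ext_of_forall_integral_eq_of_IsFiniteMeasure
  intro f
  refine eq_of_abs_sub_le_all ?_
  intro ε hε
  set M := m.real univ + m'.real univ + 1 with hM
  have hM0 : 0 < M := by positivity
  obtain ⟨p, hp⟩ := exists_polynomial_near_of_continuousOn 0 1 f f.continuous.continuousOn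
    (ε / M) (by positivity)
  have h1 := hclose m hm p f _ hp
  have h2 := hclose m' hm' p f _ hp
  rw [hpoly p] at h1
  have h3 : ε / M * m.real univ + ε / M * m'.real univ ≤ ε := by
    rw [← mul_add, div_mul_eq_mul_div, div_le_iff₀ hM0]
    gcongr
    linarith
  rw [abs_le] at *
  constructor <;> linarith

lemma laplace_uniq {μ ν : Measure ℝ} (hμ : ∀ᵐ t ∂μ, 0 ≤ t) (hν : ∀ᵐ t ∂ν, 0 ≤ t)
    (h : ∀ p : ℝ, 0 < p → ∫⁻ t, ENNReal.ofReal (Real.exp (-p * t ^ 2)) ∂μ =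
      ∫⁻ t, ENNReal.ofReal (Real.exp (-p * t ^ 2)) ∂ν)
    (hfin : ∫⁻ t, ENNReal.ofReal (Real.exp (-1 * t ^ 2)) ∂μ ≠ ∞)
    {f : ℝ → ℝ≥0∞} (hf : Measurable f) : ∫⁻ t, f t ∂μ = ∫⁻ t, f t ∂ν := by
  set w : ℝ → ℝ≥0∞ := fun t => ENNReal.ofReal (Real.exp (-1 * t ^ 2)) with hw
  set φ : ℝ → ℝ := fun t => Real.exp (-1 * t ^ 2) with hφ
  have hwm : Measurable w := by fun_prop
  have hφm : Measurable φ := by fun_prop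
  have hint : ∀ (q : Measure ℝ) (g : ℝ → ℝ≥0∞), Measurable g →
      ∫⁻ y, g y ∂((q.withDensity w).map φ) = ∫⁻ t, w t * g (φ t) ∂q := by
    intro q g hg
    rw [lintegral_map hg hφm, lintegral_withDensity_eq_lintegral_mul _ hwm (by fun_prop)]
    rfl
  have hφI : ∀ t, φ t ∈ Icc (0:ℝ) 1 := by
    intro t
    refine ⟨Real.exp_nonneg _, ?_⟩
    rw [hφ, Real.exp_le_one_iff]
    nlinarith [sq_nonneg t]
  have hae : ∀ (q : Measure ℝ), ∀ᵐ y ∂((q.withDensity w).map φ), y ∈ Icc (0:ℝ) 1 := by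
    intro q
    exact (ae_map_iff hφm.aemeasurable measurableSet_Icc).2 (Filter.Eventually.of_forall hφI)
  have hfm : ∀ q : Measure ℝ, ∫⁻ t, w t ∂q ≠ ∞ → IsFiniteMeasure ((q.withDensity w).map φ) := by
    intro q hq
    constructor
    have := hint q (fun _ => 1) measurable_const
    simp only [lintegral_one, mul_one] at this
    rw [this]
    exact hq.lt_top
  have i1 := hfm μ hfin
  have i2 := hfm ν (by rw [← h 1 one_pos]; exact hfin)
  have hmom : ∀ (q : Measure ℝ) (k : ℕ), ∫ y, y ^ k ∂((q.withDensity w).map φ) =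
      (∫⁻ t, ENNReal.ofReal (Real.exp (-((k:ℝ) + 1) * t ^ 2)) ∂q).toReal := by
    intro q k
    rw [integral_eq_lintegral_of_nonneg_ae, hint q _ (by fun_prop)]
    · congr 1
      refine lintegral_congr fun t => ?_
      rw [hw, hφ]
      simp only
      rw [← ENNReal.ofReal_mul (Real.exp_nonneg _), ← Real.exp_nat_mul, ← Real.exp_add]
      congr 2
      ring
    · filter_upwards [hae q] with y hy
      exact pow_nonneg hy.1 k
    · fun_prop
  have heq : (μ.withDensity w).map φ = (ν.withDensity w).map φ := by
    refine ext_moments (hae μ) (hae ν) fun k => ?_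
    rw [hmom, hmom, h _ (by positivity)]
  have hrec : ∀ q : Measure ℝ, (∀ᵐ t ∂q, 0 ≤ t) → ∫⁻ t, f t ∂q =
      ∫⁻ y, ENNReal.ofReal (y⁻¹) * f (√(-Real.log y)) ∂((q.withDensity w).map φ) := by
    intro q hq
    rw [hint q _ (by fun_prop)]
    refine lintegral_congr_ae ?_
    filter_upwards [hq] with t ht
    rw [hw, hφ]
    simp only
    rw [← mul_assoc, ← ENNReal.ofReal_mul (Real.exp_nonneg _),
      mul_inv_cancel₀ (Real.exp_ne_zero _), Real.log_exp]
    simp [Real.sqrt_sq ht]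
  rw [hrec μ hμ, hrec ν hν, heq]

lemma riesz_gauss (n : ℕ) (hn : 1 ≤ n) {α p r : ℝ} (hα2 : α < n) (hp : 0 < p)
    (x : EuclideanSpace ℝ (Fin n)) (hxr : ‖x‖ = r) :
    ∫⁻ y : EuclideanSpace ℝ (Fin n), ENNReal.ofReal (Real.exp (-p * ‖y‖ ^ 2)) *
      ENNReal.ofReal (‖x - y‖ ^ (α - (n:ℝ))) =
    ENNReal.ofReal (Real.pi ^ ((n:ℝ) / 2) / Real.Gamma (((n:ℝ) - α) / 2)) *
    ∫⁻ l in Ioi (0:ℝ), ENNReal.ofReal (l ^ (((n:ℝ) - α) / 2 - 1) * ((p + l) ^ (-((n:ℝ) / 2)) *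
        Real.exp (-(r ^ 2 * (p * l / (p + l)))))) := by
  have ha : 0 < ((n:ℝ) - α) / 2 := by linarith
  set a := ((n:ℝ) - α) / 2 with hadef
  have hG := Real.Gamma_pos_of_pos ha
  have hpi := Real.pi_pos
  have : Nonempty (Fin n) := ⟨⟨0, by omega⟩⟩
  have h1 : ∀ᵐ y : EuclideanSpace ℝ (Fin n), y ≠ x := by
    simp [ae_iff]
  have h2 : ∀ᵐ y : EuclideanSpace ℝ (Fin n), ENNReal.ofReal (Real.exp (-p * ‖y‖ ^ 2)) *
      ENNReal.ofReal (‖x - y‖ ^ (α - (n:ℝ))) = ENNReal.ofReal (1 / Real.Gamma a) *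
      ∫⁻ l in Ioi (0:ℝ), ENNReal.ofReal (l ^ (a - 1)) *
        ENNReal.ofReal (Real.exp (-p * ‖y‖ ^ 2) * Real.exp (-(‖x - y‖ ^ 2 * l))) := by
    filter_upwards [h1] with y hy
    have hxy : 0 < ‖x - y‖ := norm_pos_iff.2 (sub_ne_zero.2 hy.symm)
    have h3 : ∀ l ∈ Ioi (0:ℝ), ENNReal.ofReal (l ^ (a - 1)) *
        ENNReal.ofReal (Real.exp (-p * ‖y‖ ^ 2) * Real.exp (-(‖x - y‖ ^ 2 * l))) =
        ENNReal.ofReal (Real.exp (-p * ‖y‖ ^ 2)) *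
        ENNReal.ofReal (l ^ (a - 1) * Real.exp (-(‖x - y‖ ^ 2 * l))) := by
      intro l hl
      have : 0 < l := hl
      rw [← ENNReal.ofReal_mul (by positivity), ← ENNReal.ofReal_mul (by positivity)]
      congr 1
      ring
    rw [setLIntegral_congr_fun measurableSet_Ioi h3, lintegral_const_mul' _ _ ENNReal.ofReal_ne_top,
      lint_gamma ha (by positivity), ← ENNReal.ofReal_mul (by positivity),
      ← ENNReal.ofReal_mul (by positivity), ← ENNReal.ofReal_mul (by positivity)]
    congr 1
    have : (1 / ‖x - y‖ ^ 2) ^ a = ‖x - y‖ ^ (α - (n:ℝ)) := by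
      rw [one_div, ← Real.rpow_natCast, ← Real.rpow_neg hxy.le, ← Real.rpow_mul hxy.le]
      congr 1
      rw [hadef]; push_cast; ring
    rw [this]
    field_simp
  rw [lintegral_congr_ae h2, lintegral_const_mul' _ _ ENNReal.ofReal_ne_top,
    lintegral_lintegral_swap (by fun_prop)]
  have h4 : ∀ l ∈ Ioi (0:ℝ), ∫⁻ y : EuclideanSpace ℝ (Fin n), ENNReal.ofReal (l ^ (a - 1)) *
        ENNReal.ofReal (Real.exp (-p * ‖y‖ ^ 2) * Real.exp (-(‖x - y‖ ^ 2 * l))) =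
      ENNReal.ofReal (Real.pi ^ ((n:ℝ) / 2)) *
      ENNReal.ofReal (l ^ (a - 1) * ((p + l) ^ (-((n:ℝ) / 2)) *
        Real.exp (-(r ^ 2 * (p * l / (p + l)))))) := by
    intro l hl
    have hl0 : 0 < l := hl
    rw [lintegral_const_mul' _ _ ENNReal.ofReal_ne_top, lint_gauss2 n hp hl0, hxr,
      ← ENNReal.ofReal_mul (by positivity), ← ENNReal.ofReal_mul (by positivity)]
    congr 1
    rw [Real.div_rpow hpi.le (by positivity), Real.rpow_neg (by positivity)]
    field_simp
  rw [setLIntegral_congr_fun measurableSet_Ioi h4, lintegral_const_mul' _ _ ENNReal.ofReal_ne_top,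
    ← mul_assoc, ← ENNReal.ofReal_mul (by positivity)]
  congr 2
  ring

/-- the measure representing the right-hand side -/
lemma rhs_measure (n α r : ℝ) : ∃ ν : Measure ℝ, (∀ᵐ t ∂ν, 0 ≤ t) ∧
    ∀ f : ℝ → ℝ≥0∞, Measurable f → ∫⁻ t, f t ∂ν =
      ENNReal.ofReal ((2 : ℝ) ^ (-α) * r ^ (2 - n)) *
        EKplus (α / 2) (fun s => ENNReal.ofReal (s ^ (n - α - 2)) * EKminus (α / 2) f s) r := by
  set F : ℝ × ℝ → ℝ≥0∞ := fun z =>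
    ENNReal.ofReal ((2 : ℝ) ^ (-α) * r ^ (2 - n)) * ENNReal.ofReal (2 / Real.Gamma (α / 2)) *
    (ENNReal.ofReal ((r ^ 2 - z.1 ^ 2) ^ (α / 2 - 1) * z.1) *
      (ENNReal.ofReal (z.1 ^ (n - α - 2)) * ENNReal.ofReal (2 / Real.Gamma (α / 2)))) *
    {z : ℝ × ℝ | z.1 < z.2}.indicator
      (fun z => ENNReal.ofReal ((z.2 ^ 2 - z.1 ^ 2) ^ (α / 2 - 1) * z.2)) z with hF
  have hS : MeasurableSet {z : ℝ × ℝ | z.1 < z.2} := measurableSet_lt measurable_fst measurable_snd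
  have hFm : Measurable F := by
    refine Measurable.mul (by fun_prop) (Measurable.indicator (by fun_prop) hS)
  have hmain : ∀ f : ℝ → ℝ≥0∞, Measurable f →
      ∫⁻ t, f t ∂((((volume.restrict (Ioo 0 r)).prod volume).withDensity F).map Prod.snd) =
      ∫⁻ s in Ioo 0 r, ∫⁻ t, F (s, t) * f t := by
    intro f hf
    rw [lintegral_map hf measurable_snd,
      lintegral_withDensity_eq_lintegral_mul _ hFm (by fun_prop),
      lintegral_prod _ (by fun_prop)]
    rfl
  refine ⟨(((volume.restrict (Ioo 0 r)).prod volume).withDensity F).map Prod.snd, ?_, ?_⟩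
  · have hm : Measurable ((Iio (0:ℝ)).indicator (1 : ℝ → ℝ≥0∞)) :=
      measurable_one.indicator measurableSet_Iio
    have h0 := hmain _ hm
    rw [lintegral_indicator_one measurableSet_Iio] at h0
    rw [ae_iff]
    simp only [not_le]
    refine Eq.trans ?_ (h0.trans ?_)
    · rfl
    rw [setLIntegral_congr_fun (g := fun _ => 0) measurableSet_Ioo]
    · simp
    · intro s hs
      simp only
      rw [lintegral_eq_zero_iff (by fun_prop)]
      filter_upwards with t
      by_cases ht : t < 0
      · have : ¬ s < t := by have := hs.1; linarith
        simp [hF, this]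
      · simp [ht]
  · intro f hf
    rw [hmain f hf]
    unfold EKplus EKminus
    rw [← mul_assoc, ← lintegral_const_mul' _ _ (by finiteness)]
    refine lintegral_congr fun s => ?_
    simp only
    rw [← lintegral_indicator measurableSet_Ioi, ← mul_assoc (ENNReal.ofReal (s ^ (n - α - 2))),
      ← mul_assoc, ← mul_assoc, ← lintegral_const_mul' _ _ (by finiteness)]
    refine lintegral_congr fun t => ?_
    by_cases h : s < t
    · simp only [hF, indicator, mem_ofPred_eq, h, mem_Ioi, if_true]
      ring
    · simp [hF, h]

theorem riesz_radial (n : ℕ) (hn : 1 ≤ n) (α : ℝ) (hα1 : 0 < α) (hα2 : α < n)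
    (f₀ : ℝ → ℝ≥0∞) (hmeas : Measurable f₀)
    (x : EuclideanSpace ℝ (Fin n)) (r : ℝ) (hr : 0 < r) (hxr : ‖x‖ = r) :
    ENNReal.ofReal
        (1 / (2 ^ α * Real.pi ^ ((n : ℝ) / 2) * Real.Gamma (α / 2) /
          Real.Gamma (((n : ℝ) - α) / 2))) *
      ∫⁻ y, f₀ ‖y‖ * ENNReal.ofReal (‖x - y‖ ^ (α - (n : ℝ)))
    = ENNReal.ofReal ((2 : ℝ) ^ (-α) * r ^ (2 - (n : ℝ))) *
        EKplus (α / 2)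
          (fun s => ENNReal.ofReal (s ^ ((n : ℝ) - α - 2)) * EKminus (α / 2) f₀ s) r := by
  obtain ⟨ν, hν0, hν⟩ := rhs_measure n α r
  rw [← hν f₀ hmeas]
  set c := 1 / (2 ^ α * Real.pi ^ ((n : ℝ) / 2) * Real.Gamma (α / 2) /
          Real.Gamma (((n : ℝ) - α) / 2)) with hc
  set W : EuclideanSpace ℝ (Fin n) → ℝ≥0∞ :=
    fun y => ENNReal.ofReal (‖x - y‖ ^ (α - (n : ℝ))) with hW
  have hWm : Measurable W := by fun_prop
  have hL : ∀ f : ℝ → ℝ≥0∞, Measurable f →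
      ∫⁻ t, f t ∂((ENNReal.ofReal c • (volume.withDensity W)).map norm) =
      ENNReal.ofReal c * ∫⁻ y, f ‖y‖ * W y := by
    intro f hf
    rw [lintegral_map hf measurable_norm, lintegral_smul_measure,
      lintegral_withDensity_eq_lintegral_mul _ hWm (by fun_prop), smul_eq_mul]
    congr 1
    refine lintegral_congr fun y => ?_
    simp [mul_comm]
  rw [← hL f₀ hmeas]
  have ha : 0 < ((n:ℝ) - α) / 2 := by linarith
  have hb : 0 < α / 2 := by linarith
  have hab : (n:ℝ) / 2 = ((n:ℝ) - α) / 2 + α / 2 := by ring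
  have hGa := Real.Gamma_pos_of_pos ha
  have hGb := Real.Gamma_pos_of_pos hb
  have hpi := Real.pi_pos
  refine laplace_uniq ?_ hν0 ?_ ?_ hmeas
  · exact (ae_map_iff measurable_norm.aemeasurable measurableSet_Ici).2
      (Filter.Eventually.of_forall fun y => norm_nonneg y)
  · intro p hp
    rw [hL _ (by fun_prop), hν _ (by fun_prop), riesz_gauss n hn hα2 hp x hxr,
      lint_subst hab hp hr]
    unfold EKplus
    have h1 : ∀ s ∈ Ioo (0:ℝ) r, ENNReal.ofReal ((r ^ 2 - s ^ 2) ^ (α / 2 - 1) * s) *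
        (ENNReal.ofReal (s ^ ((n : ℝ) - α - 2)) *
          EKminus (α / 2) (fun t => ENNReal.ofReal (Real.exp (-p * t ^ 2))) s) =
        ENNReal.ofReal (p ^ (-(α / 2))) * ENNReal.ofReal ((r ^ 2 - s ^ 2) ^ (α / 2 - 1) *
          s ^ (2 * (((n:ℝ) - α) / 2) - 1) * Real.exp (-p * s ^ 2)) := by
      intro s hs
      have hs0 := hs.1
      have hd : 0 < r ^ 2 - s ^ 2 := by nlinarith [hs.2]
      rw [ekminus_gauss hb hp hs0, ← ENNReal.ofReal_mul (by positivity),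
        ← ENNReal.ofReal_mul (by positivity), ← ENNReal.ofReal_mul (by positivity)]
      congr 1
      have : s ^ (2 * (((n:ℝ) - α) / 2) - 1) = s ^ ((n : ℝ) - α - 2) * s := by
        nth_rw 3 [← Real.rpow_one s]
        rw [← Real.rpow_add hs0]; congr 1; ring
      rw [this]
      ring
    rw [setLIntegral_congr_fun measurableSet_Ioo h1,
      lintegral_const_mul' _ _ ENNReal.ofReal_ne_top, ← mul_assoc, ← mul_assoc, ← mul_assoc,
      ← mul_assoc, ← ENNReal.ofReal_mul (by positivity), ← ENNReal.ofReal_mul (by positivity),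
      ← ENNReal.ofReal_mul (by positivity), ← ENNReal.ofReal_mul (by positivity)]
    congr 2
    rw [hc, Real.rpow_neg (by norm_num : (0:ℝ) ≤ 2)]
    field_simp
  · rw [hL _ (by fun_prop), riesz_gauss n hn hα2 one_pos x hxr]
    exact ENNReal.mul_ne_top ENNReal.ofReal_ne_top
      (ENNReal.mul_ne_top ENNReal.ofReal_ne_top (lint_fin hab ha hb))
end

section
/- Let m ≥ 1 and suppose f₀ : (0,∞) → [0,∞) is continuous with ∫₀ᵃ f₀(t) t^{n−j−1} dt < ∞ and ∫ₐ^∞ f₀(t) t^{k−1} dt < ∞ for some a > 0, where j, k ≥ 1 are even integers with ℓ = n−j−k ≥ 1. Then f₀ can be recovered from φ = I_{j,k} f₀ by f₀(t) = c̃₁^{−1} ((−D)^{k/2} r^{2−n+j+k} D^{j/2} s^{n−k−2} φ)(t) for all t > 0, where D = (1/(2t)) d/dt, c̃₁ = π^{k/2} Γ((n−k)/2)/Γ((n−j−k)/2), and the operators are applied right to left: multiply φ(s) by s^{n−k−2}, apply D j/2 times, multiply by r^{2−n+j+k}, apply (−D) k/2 times. -/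
open MeasureTheory Set

/-- The real Erdélyi–Kober fractional integral of the first kind. -/
noncomputable def EKplusR (β : ℝ) (g : ℝ → ℝ) (t : ℝ) : ℝ :=
  (2 / Real.Gamma β) * ∫ r in Ioo (0:ℝ) t, (t ^ 2 - r ^ 2) ^ (β - 1) * g r * r

/-- The real Erdélyi–Kober fractional integral of the second kind. -/
noncomputable def EKminusR (β : ℝ) (g : ℝ → ℝ) (t : ℝ) : ℝ :=
  (2 / Real.Gamma β) * ∫ r in Ioi t, (r ^ 2 - t ^ 2) ^ (β - 1) * g r * r

/-- The operator `D = (1/(2t)) d/dt`. -/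
noncomputable def Dop (g : ℝ → ℝ) : ℝ → ℝ := fun t => deriv g t / (2 * t)

/-- The operator `−D = −(1/(2t)) d/dt`. -/
noncomputable def negDop (g : ℝ → ℝ) : ℝ → ℝ := fun t => -(deriv g t / (2 * t))

/-- The mixed Radon transform of a radial profile,
`(I_{j,k} f₀)(s) = (c̃₁/s^{n−k−2}) (I^{j/2}_{+,2} r^{ℓ−2} I^{k/2}_{−,2} f₀)(s)` with
`c̃₁ = π^{k/2} Γ((n−k)/2)/Γ((n−j−k)/2)`. -/
noncomputable def IjkR (n j k ℓ : ℕ) (f₀ : ℝ → ℝ) (s : ℝ) : ℝ :=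
  ((Real.pi ^ ((k : ℝ) / 2) * Real.Gamma (((n : ℝ) - k) / 2) /
      Real.Gamma (((n : ℝ) - j - k) / 2)) / s ^ ((n : ℝ) - k - 2)) *
    EKplusR ((j : ℝ) / 2)
      (fun r => r ^ ((ℓ : ℝ) - 2) * EKminusR ((k : ℝ) / 2) f₀ r) s

open Filter Topology

noncomputable def AAop (q : ℕ) (H : ℝ → ℝ) (s : ℝ) : ℝ :=
  ∫ r in Ioo (0:ℝ) s, (s ^ 2 - r ^ 2) ^ q * H r

noncomputable def BBop (q : ℕ) (H : ℝ → ℝ) (t : ℝ) : ℝ :=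
  ∫ r in Ioi t, (r ^ 2 - t ^ 2) ^ q * H r

lemma cmul_int {H g : ℝ → ℝ} {s : ℝ} (hg : Continuous g) (hH : IntegrableOn H (Ioo 0 s)) :
    IntegrableOn (fun r => g r * H r) (Ioo 0 s) := by
  rw [← integrableOn_Icc_iff_integrableOn_Ioo] at hH ⊢
  exact hH.continuousOn_mul hg.continuousOn isCompact_Icc

lemma AA_zero {H : ℝ → ℝ} (hc : ContinuousOn H (Ioi 0))
    (hi : ∀ s > 0, IntegrableOn H (Ioo 0 s)) (s : ℝ) (hs : 0 < s) :
    HasDerivAt (AAop 0 H) (H s) s := by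
  have h := intervalIntegral.integral_hasDerivAt_right (f := H) (a := 0) (b := s)
    (by
      rw [intervalIntegrable_iff_integrableOn_Ioo_of_le hs.le]
      exact hi s hs)
    (hc.stronglyMeasurableAtFilter isOpen_Ioi s hs)
    (hc.continuousAt (Ioi_mem_nhds hs))
  refine h.congr_of_eventuallyEq ?_
  filter_upwards [Ioi_mem_nhds hs] with x hx
  rw [intervalIntegral.integral_of_le (le_of_lt hx), integral_Ioc_eq_integral_Ioo]
  simp [AAop]

lemma AA_succ_eq {H : ℝ → ℝ} (q : ℕ) (s : ℝ) (hi : IntegrableOn H (Ioo 0 s)) :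
    AAop (q+1) H s = s ^ 2 * AAop q H s - AAop q (fun r => r ^ 2 * H r) s := by
  unfold AAop
  rw [← integral_const_mul, ← integral_sub]
  · congr 1; ext r; ring
  · exact (cmul_int (g := fun r => (s ^ 2 - r ^ 2) ^ q) (by fun_prop) hi).const_mul _
  · exact cmul_int (g := fun r => (s ^ 2 - r ^ 2) ^ q) (by fun_prop)
      (cmul_int (g := fun r => r ^ 2) (by fun_prop) hi)

lemma AA_succ (q : ℕ) : ∀ {H : ℝ → ℝ} (_ : ContinuousOn H (Ioi 0))
    (_ : ∀ s > 0, IntegrableOn H (Ioo 0 s)) (s : ℝ) (_ : 0 < s),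
    HasDerivAt (AAop (q+1) H) (2 * (q+1) * s * AAop q H s) s := by
  induction q with
  | zero =>
    intro H hc hi s hs
    have e : AAop (0+1) H =ᶠ[𝓝 s] fun s => s ^ 2 * AAop 0 H s - AAop 0 (fun r => r ^ 2 * H r) s := by
      filter_upwards [Ioi_mem_nhds hs] with x hx using AA_succ_eq 0 x (hi x hx)
    refine HasDerivAt.congr_of_eventuallyEq ?_ e
    have h1 := AA_zero hc hi s hs
    have h2 := AA_zero (H := fun r => r ^ 2 * H r) (by fun_prop)
      (fun s hs => cmul_int (by fun_prop) (hi s hs)) s hs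
    refine HasDerivAt.congr_deriv (((hasDerivAt_pow 2 s).mul h1).sub h2) ?_
    simp
  | succ q ih =>
    intro H hc hi s hs
    have e : AAop (q+1+1) H =ᶠ[𝓝 s]
        fun s => s ^ 2 * AAop (q+1) H s - AAop (q+1) (fun r => r ^ 2 * H r) s := by
      filter_upwards [Ioi_mem_nhds hs] with x hx using AA_succ_eq (q+1) x (hi x hx)
    refine HasDerivAt.congr_of_eventuallyEq ?_ e
    have h1 := ih hc hi s hs
    have h2 := ih (H := fun r => r ^ 2 * H r) (by fun_prop)
      (fun s hs => cmul_int (by fun_prop) (hi s hs)) s hs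
    refine HasDerivAt.congr_deriv (((hasDerivAt_pow 2 s).mul h1).sub h2) ?_
    rw [AA_succ_eq q s (hi s hs)]
    push_cast; ring

lemma Bint {H : ℝ → ℝ} (q : ℕ) (hc : ContinuousOn H (Ioi 0)) (t : ℝ) (ht : 0 < t)
    (hi : IntegrableOn (fun r => r ^ (2*q) * H r) (Ioi t)) :
    IntegrableOn (fun r => (r ^ 2 - t ^ 2) ^ q * H r) (Ioi t) := by
  have hc' : ContinuousOn H (Ioi t) := hc.mono (Ioi_subset_Ioi ht.le)
  refine Integrable.mono hi ?_ ?_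
  · exact ContinuousOn.aestronglyMeasurable (by fun_prop) measurableSet_Ioi
  · refine (ae_restrict_iff' measurableSet_Ioi).2 (Eventually.of_forall fun r hr => ?_)
    have hr' : t < r := hr
    rw [norm_mul, norm_mul]
    gcongr
    rw [pow_mul, norm_pow, norm_pow]
    gcongr
    rw [Real.norm_eq_abs, Real.norm_eq_abs, abs_of_nonneg (by nlinarith), abs_of_nonneg (by positivity)]
    nlinarith

lemma Blow {H : ℝ → ℝ} (q : ℕ) (hc : ContinuousOn H (Ioi 0)) (t : ℝ) (ht : 0 < t)
    (hi : IntegrableOn (fun r => r ^ (2*(q+1)) * H r) (Ioi t)) :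
    IntegrableOn (fun r => r ^ (2*q) * H r) (Ioi t) := by
  have hc' : ContinuousOn H (Ioi t) := hc.mono (Ioi_subset_Ioi ht.le)
  refine Integrable.mono (hi.const_mul ((t^2)⁻¹)) ?_ ?_
  · exact ContinuousOn.aestronglyMeasurable (by fun_prop) measurableSet_Ioi
  · refine (ae_restrict_iff' measurableSet_Ioi).2 (Eventually.of_forall fun r hr => ?_)
    have hr' : t < r := hr
    have hr0 : 0 < r := ht.trans hr'
    rw [← mul_assoc, norm_mul, norm_mul _ (H r)]
    gcongr
    rw [Real.norm_eq_abs, Real.norm_eq_abs, abs_of_nonneg (by positivity),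
      abs_of_nonneg (by positivity), inv_mul_eq_div, le_div_iff₀ (by positivity), mul_add, pow_add]
    gcongr

lemma BB_zero {H : ℝ → ℝ} (hc : ContinuousOn H (Ioi 0))
    (hi : ∀ s > 0, IntegrableOn H (Ioi s)) (s : ℝ) (hs : 0 < s) :
    HasDerivAt (BBop 0 H) (-H s) s := by
  have hs2 : 0 < s / 2 := by positivity
  have h := intervalIntegral.integral_hasDerivAt_right (f := H) (a := s/2) (b := s)
    (by
      rw [intervalIntegrable_iff_integrableOn_Ioc_of_le (by linarith)]
      exact (hi _ hs2).mono_set Ioc_subset_Ioi_self)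
    (hc.stronglyMeasurableAtFilter isOpen_Ioi s hs)
    (hc.continuousAt (Ioi_mem_nhds hs))
  have h' := h.const_sub (∫ x in Ioi (s/2), H x)
  refine h'.congr_of_eventuallyEq ?_
  filter_upwards [Ioi_mem_nhds hs] with x hx
  rw [← intervalIntegral.integral_interval_add_Ioi (hi _ hs2) (hi x hx)]
  simp [BBop]

lemma BB_succ_eq {H : ℝ → ℝ} (q : ℕ) (s : ℝ) (hs : 0 < s) (hc : ContinuousOn H (Ioi 0))
    (hi : IntegrableOn (fun r => r ^ (2*(q+1)) * H r) (Ioi s)) :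
    BBop (q+1) H s = BBop q (fun r => r ^ 2 * H r) s - s ^ 2 * BBop q H s := by
  unfold BBop
  rw [← integral_const_mul, ← integral_sub]
  · congr 1; ext r; ring
  · refine Bint q (by fun_prop) s hs ?_
    convert hi using 2
    ring
  · exact (Bint q hc s hs (Blow q hc s hs hi)).const_mul _

lemma BB_succ (q : ℕ) : ∀ {H : ℝ → ℝ} (_ : ContinuousOn H (Ioi 0))
    (_ : ∀ s > 0, IntegrableOn (fun r => r ^ (2*(q+1)) * H r) (Ioi s)) (s : ℝ) (_ : 0 < s),
    HasDerivAt (BBop (q+1) H) (-(2 * (q+1) * s * BBop q H s)) s := by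
  induction q with
  | zero =>
    intro H hc hi s hs
    have e : BBop (0+1) H =ᶠ[𝓝 s] fun s => BBop 0 (fun r => r ^ 2 * H r) s - s ^ 2 * BBop 0 H s := by
      filter_upwards [Ioi_mem_nhds hs] with x hx using BB_succ_eq 0 x hx hc (hi x hx)
    refine HasDerivAt.congr_of_eventuallyEq ?_ e
    have h1 := BB_zero hc (fun s hs => by simpa using Blow 0 hc s hs (hi s hs)) s hs
    have h2 := BB_zero (H := fun r => r ^ 2 * H r) (by fun_prop)
      (fun s hs => by simpa using (hi s hs)) s hs
    refine HasDerivAt.congr_deriv (h2.sub ((hasDerivAt_pow 2 s).mul h1)) ?_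
    simp
  | succ q ih =>
    intro H hc hi s hs
    have e : BBop (q+1+1) H =ᶠ[𝓝 s]
        fun s => BBop (q+1) (fun r => r ^ 2 * H r) s - s ^ 2 * BBop (q+1) H s := by
      filter_upwards [Ioi_mem_nhds hs] with x hx using BB_succ_eq (q+1) x hx hc (hi x hx)
    refine HasDerivAt.congr_of_eventuallyEq ?_ e
    have h1 := ih hc (fun s hs => Blow (q+1) hc s hs (hi s hs)) s hs
    have h2 := ih (H := fun r => r ^ 2 * H r) (by fun_prop)
      (fun s hs => by
        convert (hi s hs) using 2
        ring) s hs
    refine HasDerivAt.congr_deriv (h2.sub ((hasDerivAt_pow 2 s).mul h1)) ?_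
    rw [BB_succ_eq q s hs hc (Blow (q+1) hc s hs (hi s hs))]
    push_cast; ring

lemma Dop_iter {H : ℝ → ℝ} (hc : ContinuousOn H (Ioi 0))
    (hi : ∀ s > 0, IntegrableOn H (Ioo 0 s)) (c : ℝ) (q : ℕ) : ∀ (g : ℝ → ℝ)
    (_ : EqOn g (fun s => c * (2 / (q.factorial : ℝ) * AAop q H s)) (Ioi 0)),
    EqOn (Dop^[q+1] g) (fun s => c * (H s / s)) (Ioi 0) := by
  induction q with
  | zero =>
    intro g hg s hs
    have hs' : 0 < s := hs
    have h := ((AA_zero hc hi s hs).const_mul (2 / ((Nat.factorial 0 : ℕ) : ℝ))).const_mul c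
    have h2 := h.congr_of_eventuallyEq (hg.eventuallyEq_of_mem (Ioi_mem_nhds hs))
    simp only [zero_add, Function.iterate_one, Dop, h2.deriv]
    simp
    field_simp
  | succ q ih =>
    intro g hg
    rw [Function.iterate_succ_apply]
    apply ih
    intro s hs
    have hs' : 0 < s := hs
    have h := ((AA_succ q hc hi s hs).const_mul (2 / ((Nat.factorial (q+1) : ℕ) : ℝ))).const_mul c
    have h2 := h.congr_of_eventuallyEq (hg.eventuallyEq_of_mem (Ioi_mem_nhds hs))
    simp only [Dop, h2.deriv, Nat.factorial_succ]
    have := Nat.factorial_ne_zero q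
    push_cast
    field_simp

lemma negDop_iter {H : ℝ → ℝ} (hc : ContinuousOn H (Ioi 0)) (c : ℝ) (q : ℕ) :
    ∀ (_ : ∀ s > 0, IntegrableOn (fun r => r ^ (2*q) * H r) (Ioi s)) (g : ℝ → ℝ)
    (_ : EqOn g (fun s => c * (2 / (q.factorial : ℝ) * BBop q H s)) (Ioi 0)),
    EqOn (negDop^[q+1] g) (fun s => c * (H s / s)) (Ioi 0) := by
  induction q with
  | zero =>
    intro hi g hg s hs
    have hs' : 0 < s := hs
    have h := ((BB_zero hc (by simpa using hi) s hs).const_mul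
      (2 / ((Nat.factorial 0 : ℕ) : ℝ))).const_mul c
    have h2 := h.congr_of_eventuallyEq (hg.eventuallyEq_of_mem (Ioi_mem_nhds hs))
    simp only [zero_add, Function.iterate_one, negDop, h2.deriv]
    simp
    field_simp
  | succ q ih =>
    intro hi g hg
    rw [Function.iterate_succ_apply]
    apply ih (fun s hs => Blow q hc s hs (hi s hs))
    intro s hs
    have hs' : 0 < s := hs
    have h := ((BB_succ q hc hi s hs).const_mul (2 / ((Nat.factorial (q+1) : ℕ) : ℝ))).const_mul c
    have h2 := h.congr_of_eventuallyEq (hg.eventuallyEq_of_mem (Ioi_mem_nhds hs))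
    simp only [negDop, h2.deriv, Nat.factorial_succ]
    have := Nat.factorial_ne_zero q
    push_cast
    field_simp

lemma BB_cont {H : ℝ → ℝ} (hc : ContinuousOn H (Ioi 0)) (q : ℕ)
    (hi : ∀ s > 0, IntegrableOn (fun r => r ^ (2*q) * H r) (Ioi s)) :
    ContinuousOn (BBop q H) (Ioi 0) := by
  intro s hs
  cases q with
  | zero => exact (BB_zero hc (by simpa using hi) s hs).continuousAt.continuousWithinAt
  | succ q => exact (BB_succ q hc hi s hs).continuousAt.continuousWithinAt

lemma tail_int {K : ℝ → ℝ} (hc : ContinuousOn K (Ioi 0)) (hp : ∀ t > 0, 0 ≤ K t)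
    (hi : ∀ s > 0, IntegrableOn K (Ioi s)) (m : ℕ) (s : ℝ) (hs : 0 < s)
    (h0 : IntegrableOn (fun u => u ^ (m+1) * K u) (Ioo 0 s)) :
    IntegrableOn (fun r => r ^ m * BBop 0 K r) (Ioo 0 s) := by
  have hBc : ContinuousOn (BBop 0 K) (Ioi 0) := BB_cont hc 0 (by simpa using hi)
  have hBn : ∀ t > 0, 0 ≤ BBop 0 K t := fun t ht => by
    refine setIntegral_nonneg measurableSet_Ioi fun r hr => ?_
    simpa using hp r (ht.trans hr)
  have hsub : ∀ e > 0, Icc e s ⊆ Ioi (0:ℝ) := fun e he x hx => lt_of_lt_of_le he hx.1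
  rw [← integrableOn_Ioc_iff_integrableOn_Ioo] at h0 ⊢
  have key : ∀ e, 0 < e → e ≤ s → ∫ x in Ioc e s, ‖x ^ m * BBop 0 K x‖ ≤
      s ^ (m+1) * BBop 0 K s + ∫ u in Ioc 0 s, u ^ (m+1) * K u := by
    intro e he hes
    have hcK : ContinuousOn K (Icc e s) := hc.mono (hsub e he)
    have hcB : ContinuousOn (BBop 0 K) (Icc e s) := hBc.mono (hsub e he)
    have i1 : IntervalIntegrable (fun x => (m+1) * x ^ m * BBop 0 K x) volume e s :=
      ContinuousOn.intervalIntegrable_of_Icc hes (by fun_prop)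
    have i0 : IntervalIntegrable (fun x => x ^ m * BBop 0 K x) volume e s :=
      ContinuousOn.intervalIntegrable_of_Icc hes (by fun_prop)
    have i2 : IntervalIntegrable (fun x => x ^ (m+1) * K x) volume e s :=
      ContinuousOn.intervalIntegrable_of_Icc hes (by fun_prop)
    have ftc := intervalIntegral.integral_eq_sub_of_hasDerivAt (a := e) (b := s)
      (f := fun x => x ^ (m+1) * BBop 0 K x)
      (f' := fun x => (m+1) * x ^ m * BBop 0 K x - x ^ (m+1) * K x)
      (by
        intro x hx
        rw [uIcc_of_le hes] at hx
        refine HasDerivAt.congr_deriv ((hasDerivAt_pow (m+1) x).mul (BB_zero hc hi x (hsub e he hx))) ?_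
        simp; ring) (i1.sub i2)
    rw [intervalIntegral.integral_sub i1 i2] at ftc
    have e1 : ∫ x in Ioc e s, ‖x ^ m * BBop 0 K x‖ = ∫ x in e..s, x ^ m * BBop 0 K x := by
      rw [intervalIntegral.integral_of_le hes]
      refine setIntegral_congr_fun measurableSet_Ioc fun x hx => ?_
      have hx0 : 0 < x := he.trans hx.1
      have := hBn x hx0
      exact Real.norm_of_nonneg (by positivity)
    have e2 : ∫ x in e..s, x ^ m * BBop 0 K x ≤ ∫ x in e..s, (m+1) * x ^ m * BBop 0 K x := by
      refine intervalIntegral.integral_mono_on hes i0 i1 fun x hx => ?_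
      have hx0 : 0 < x := hsub e he hx
      have := hBn x hx0
      have h3 : 0 ≤ m * (x ^ m * BBop 0 K x) := by positivity
      nlinarith
    have e3 : ∫ x in e..s, x ^ (m+1) * K x ≤ ∫ u in Ioc 0 s, u ^ (m+1) * K u := by
      rw [intervalIntegral.integral_of_le hes]
      refine setIntegral_mono_set h0 ?_ (Ioc_subset_Ioc_left he.le).eventuallyLE
      refine (ae_restrict_iff' measurableSet_Ioc).2 (Eventually.of_forall fun r hr => ?_)
      have := hp r hr.1
      have := hr.1
      simp only [Pi.zero_apply]
      positivity
    have e4 : 0 ≤ e ^ (m+1) * BBop 0 K e := by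
      have := hBn e he
      positivity
    rw [e1]
    linarith
  refine integrableOn_Ioc_of_intervalIntegral_norm_bounded_left (l := atTop)
    (a := fun i : ℕ => s / ((i:ℝ) + 1)) ?_ ?_ (Eventually.of_forall fun i => key _ ?_ ?_)
  · intro i
    have he : 0 < s / ((i:ℝ) + 1) := by positivity
    have hcB : ContinuousOn (BBop 0 K) (Icc (s / ((i:ℝ) + 1)) s) := hBc.mono (hsub _ he)
    exact (ContinuousOn.integrableOn_Icc (by fun_prop)).mono_set Ioc_subset_Icc_self
  · have := tendsto_one_div_add_atTop_nhds_zero_nat (𝕜 := ℝ)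
    simpa [div_eq_mul_inv] using this.const_mul s
  · positivity
  · exact div_le_self hs.le (by linarith [(Nat.cast_nonneg i : (0:ℝ) ≤ i)])

/-- Inversion of the mixed Radon transform of a radial profile for even `j`, `k`:
`f₀(t) = c̃₁^{−1} ((−D)^{k/2} r^{2−n+j+k} D^{j/2} s^{n−k−2} (I_{j,k} f₀))(t)`. -/
theorem mixed_radon_radial_inversion (n j k ℓ : ℕ) (hj : 1 ≤ j) (hk : 1 ≤ k)
    (hje : Even j) (hke : Even k) (hℓ : 1 ≤ ℓ) (hn : n = j + k + ℓ)
    (f₀ : ℝ → ℝ) (hpos : ∀ t, 0 ≤ f₀ t) (hc : ContinuousOn f₀ (Ioi (0:ℝ)))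
    (a : ℝ) (ha : 0 < a)
    (h1 : IntegrableOn (fun t => f₀ t * t ^ ((n : ℝ) - j - 1)) (Ioo (0:ℝ) a))
    (h2 : IntegrableOn (fun t => f₀ t * t ^ ((k : ℝ) - 1)) (Ioi a)) :
    ∀ t > (0:ℝ),
      f₀ t = (Real.pi ^ ((k : ℝ) / 2) * Real.Gamma (((n : ℝ) - k) / 2) /
          Real.Gamma (((n : ℝ) - j - k) / 2))⁻¹ *
        (negDop^[k / 2] (fun r => r ^ (2 - (n : ℝ) + j + k) *
          (Dop^[j / 2] (fun s => s ^ ((n : ℝ) - k - 2) * IjkR n j k ℓ f₀ s)) r)) t := by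
  obtain ⟨q, rfl⟩ : ∃ q, j = 2 * (q + 1) := by
    obtain ⟨x, hx⟩ := hje
    exact ⟨x - 1, by omega⟩
  obtain ⟨p, rfl⟩ : ∃ p, k = 2 * (p + 1) := by
    obtain ⟨x, hx⟩ := hke
    exact ⟨x - 1, by omega⟩
  obtain ⟨m, rfl⟩ : ∃ m, ℓ = m + 1 := ⟨ℓ - 1, by omega⟩
  set c : ℝ := Real.pi ^ (((2 * (p + 1) : ℕ) : ℝ) / 2) *
    Real.Gamma (((n : ℝ) - (2 * (p + 1) : ℕ)) / 2) /
      Real.Gamma (((n : ℝ) - (2 * (q + 1) : ℕ) - (2 * (p + 1) : ℕ)) / 2) with hcdef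
  have hnR : (n : ℝ) = 2 * (q + 1) + 2 * (p + 1) + (m + 1) := by
    rw [hn]; push_cast; ring
  have hc0 : c ≠ 0 := by
    have g1 : 0 < Real.Gamma (((n : ℝ) - (2 * (p + 1) : ℕ)) / 2) := by
      apply Real.Gamma_pos_of_pos
      rw [hnR]; push_cast
      have : (0:ℝ) < 2 * (q + 1) + (m + 1) := by positivity
      linarith
    have g2 : 0 < Real.Gamma (((n : ℝ) - (2 * (q + 1) : ℕ) - (2 * (p + 1) : ℕ)) / 2) := by
      apply Real.Gamma_pos_of_pos
      rw [hnR]; push_cast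
      have : (0:ℝ) < (m + 1) := by positivity
      linarith
    have := Real.pi_pos
    positivity
  set H : ℝ → ℝ := fun u => f₀ u * u with hH
  have hHc : ContinuousOn H (Ioi 0) := by fun_prop
  set K : ℝ → ℝ := fun u => u ^ (2 * p) * H u with hK
  have hKc : ContinuousOn K (Ioi 0) := by fun_prop
  have hKp : ∀ t > 0, 0 ≤ K t := fun t ht => by
    have := hpos t
    simp only [hK, hH]
    positivity
  have h2' : IntegrableOn K (Ioi a) := by
    refine h2.congr_fun (fun t ht => ?_) measurableSet_Ioi
    have ht0 : 0 < t := ha.trans ht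
    have : (((2 * (p + 1) : ℕ) : ℝ) - 1) = ((2 * p + 1 : ℕ) : ℝ) := by push_cast; ring
    simp only [this, Real.rpow_natCast, hK, hH]
    ring
  have hKi : ∀ s > 0, IntegrableOn K (Ioi s) := by
    intro s hs
    have hcs : IntegrableOn K (Icc s a) :=
      (hKc.mono fun x hx => lt_of_lt_of_le hs hx.1).integrableOn_Icc
    refine (hcs.union h2').mono_set fun x hx => ?_
    rcases le_or_gt x a with h | h
    · exact Or.inl ⟨le_of_lt hx, h⟩
    · exact Or.inr h
  have h1' : IntegrableOn (fun u => u ^ (m + 1) * K u) (Ioo 0 a) := by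
    refine h1.congr_fun (fun t ht => ?_) measurableSet_Ioo
    have : ((n : ℝ) - ((2 * (q + 1) : ℕ) : ℝ) - 1) = ((2 * p + 1 + (m + 1) : ℕ) : ℝ) := by
      rw [hnR]; push_cast; ring
    simp only [this, Real.rpow_natCast, hK, hH]
    ring
  have hK0 : ∀ s > 0, IntegrableOn (fun u => u ^ (m + 1) * K u) (Ioo 0 s) := by
    intro s hs
    have hcs : IntegrableOn (fun u => u ^ (m + 1) * K u) (Icc a s) := by
      have : ContinuousOn K (Icc a s) := hKc.mono fun x hx => lt_of_lt_of_le ha hx.1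
      exact ContinuousOn.integrableOn_Icc (by fun_prop)
    refine (h1'.union hcs).mono_set fun x hx => ?_
    rcases lt_or_ge x a with h | h
    · exact Or.inl ⟨hx.1, h⟩
    · exact Or.inr ⟨h, hx.2.le⟩
  have hBc : ContinuousOn (BBop p H) (Ioi 0) := BB_cont hHc p hKi
  have hEm : ∀ r > 0, EKminusR (((2 * (p + 1) : ℕ) : ℝ) / 2) f₀ r =
      2 / (p.factorial : ℝ) * BBop p H r := by
    intro r hr
    have e : (((2 * (p + 1) : ℕ) : ℝ) / 2) = p + 1 := by push_cast; ring
    rw [EKminusR, e, Real.Gamma_nat_eq_factorial, BBop]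
    congr 2
    ext u
    simp only [add_sub_cancel_right, Real.rpow_natCast, hH]
    ring
  set H2 : ℝ → ℝ := fun r => r ^ m * (2 / (p.factorial : ℝ) * BBop p H r) with hH2
  have hH2c : ContinuousOn H2 (Ioi 0) := by fun_prop
  have hH2i : ∀ s > 0, IntegrableOn H2 (Ioo 0 s) := by
    intro s hs
    have t1 := tail_int hKc hKp hKi m s hs (hK0 s hs)
    refine Integrable.mono (t1.const_mul (2 / (p.factorial : ℝ)))
      ((hH2c.mono Ioo_subset_Ioi_self).aestronglyMeasurable measurableSet_Ioo) ?_
    refine (ae_restrict_iff' measurableSet_Ioo).2 (Eventually.of_forall fun r hr => ?_)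
    have hr0 : 0 < r := hr.1
    have b0 : 0 ≤ BBop p H r := by
      refine setIntegral_nonneg measurableSet_Ioi fun u hu => ?_
      have hu' : r < u := hu
      have := hpos u
      have h3 : 0 ≤ u ^ 2 - r ^ 2 := by nlinarith
      have : 0 < u := hr0.trans hu'
      simp only [hH]
      positivity
    have b1 : BBop p H r ≤ BBop 0 K r := by
      refine setIntegral_mono_on (Bint p hHc r hr0 (hKi r hr0)) (by simpa using hKi r hr0)
        measurableSet_Ioi fun u hu => ?_
      have hu' : r < u := hu
      have := hpos u
      have h3 : 0 ≤ u ^ 2 - r ^ 2 := by nlinarith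
      have : 0 < u := hr0.trans hu'
      simp only [hK, hH, pow_zero, one_mul, pow_mul]
      gcongr
      nlinarith
    have b2 : 0 ≤ BBop 0 K r := b0.trans b1
    simp only [hH2]
    rw [Real.norm_of_nonneg (by positivity), Real.norm_of_nonneg (by positivity)]
    calc r ^ m * (2 / (p.factorial : ℝ) * BBop p H r)
        = 2 / (p.factorial : ℝ) * (r ^ m * BBop p H r) := by ring
      _ ≤ _ := by gcongr
  have hstep1 : EqOn (fun s => s ^ ((n : ℝ) - (2 * (p + 1) : ℕ) - 2) *
      IjkR n (2 * (q + 1)) (2 * (p + 1)) (m + 1) f₀ s)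
      (fun s => c * (2 / (q.factorial : ℝ) * AAop q H2 s)) (Ioi 0) := by
    intro s hs
    have hs0 : 0 < s := hs
    have e : (((2 * (q + 1) : ℕ) : ℝ) / 2) = q + 1 := by push_cast; ring
    have hne : s ^ ((n : ℝ) - (2 * (p + 1) : ℕ) - 2) ≠ 0 := (Real.rpow_pos_of_pos hs0 _).ne'
    simp only [IjkR]
    rw [← hcdef]
    have hA : EKplusR (((2 * (q + 1) : ℕ) : ℝ) / 2) (fun r => r ^ (((m + 1 : ℕ) : ℝ) - 2) *
        EKminusR (((2 * (p + 1) : ℕ) : ℝ) / 2) f₀ r) s =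
        2 / (q.factorial : ℝ) * AAop q H2 s := by
      rw [EKplusR, e, Real.Gamma_nat_eq_factorial, AAop]
      congr 1
      refine setIntegral_congr_fun measurableSet_Ioo fun r hr => ?_
      have hr0 : 0 < r := hr.1
      simp only [add_sub_cancel_right, Real.rpow_natCast, hH2]
      rw [hEm r hr0]
      have h5 : r ^ (((m + 1 : ℕ) : ℝ) - 2) * r = r ^ m := by
        rw [← Real.rpow_add_one hr0.ne', ← Real.rpow_natCast]
        congr 1; push_cast; ring
      rw [← h5]; ring
    rw [hA]
    field_simp
  have hstep2 := Dop_iter hH2c hH2i c q _ hstep1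
  have e1 : 2 * (q + 1) / 2 = q + 1 := by omega
  have e2 : 2 * (p + 1) / 2 = p + 1 := by omega
  rw [e1, e2]
  intro t ht
  have hfin := negDop_iter hHc c p hKi (fun r => r ^ (2 - (n : ℝ) + (2 * (q + 1) : ℕ) +
      (2 * (p + 1) : ℕ)) * (Dop^[q + 1] (fun s => s ^ ((n : ℝ) - (2 * (p + 1) : ℕ) - 2) *
      IjkR n (2 * (q + 1)) (2 * (p + 1)) (m + 1) f₀ s)) r) (by
    intro r hr
    have hr0 : 0 < r := hr
    simp only
    rw [hstep2 hr]
    simp only [hH2]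
    have h6 : r ^ (2 - (n : ℝ) + (2 * (q + 1) : ℕ) + (2 * (p + 1) : ℕ)) * r ^ m = r := by
      rw [← Real.rpow_natCast r m, ← Real.rpow_add hr0]
      conv_rhs => rw [← Real.rpow_one r]
      congr 1; rw [hnR]; push_cast; ring
    calc _ = c * (2 / (p.factorial : ℝ) * BBop p H r) *
          ((r ^ (2 - (n : ℝ) + (2 * (q + 1) : ℕ) + (2 * (p + 1) : ℕ)) * r ^ m) / r) := by ring
      _ = _ := by rw [h6, div_self hr0.ne', mul_one]) ht
  rw [hfin]
  simp only [hH]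
  have := ht.ne'
  field_simp
end
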